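/- Let x_1 < x_2 < x_3 < x_4 be real numbers. Then θ̂ = (x_2x_4 − x_1x_3)/(x_4 − x_3 + x_2 − x_1) + i·√((x_4 − x_3)(x_3 − x_2)(x_4 − x_1)(x_2 − x_1))/(x_4 − x_3 + x_2 − x_1) lies in ℍ and maximizes the Cauchy likelihood of the sample (x_1, x_2, x_3, x_4) over ℍ: L(θ) ≤ L(θ̂) for all θ ∈ ℍ. -/

import Mathlib

open Complex Finset

/-- The Cauchy likelihood of the sample `x` at parameter `θ = μ + iσ`. -/
noncomputable def cauchyL {n : ℕ} (x : Fin n → ℝ) (θ : ℂ) : ℝ :=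
  ∏ j, (θ.im / Real.pi) / ((x j - θ.re) ^ 2 + θ.im ^ 2)

lemma pair_id (a c u v : ℝ) : ((a - u) ^ 2 + v ^ 2) * ((c - u) ^ 2 + v ^ 2) =
    (u ^ 2 + v ^ 2 - (a + c) * u + a * c) ^ 2 + v ^ 2 * (c - a) ^ 2 := by ring

lemma L_eq (x₁ x₂ x₃ x₄ : ℝ) (θ : ℂ) (h : 0 < θ.im) :
    cauchyL ![x₁, x₂, x₃, x₄] θ = (θ.im ^ 4 / Real.pi ^ 4) /
      (((θ.re ^ 2 + θ.im ^ 2 - (x₁ + x₃) * θ.re + x₁ * x₃) ^ 2 + θ.im ^ 2 * (x₃ - x₁) ^ 2) *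
       ((θ.re ^ 2 + θ.im ^ 2 - (x₂ + x₄) * θ.re + x₂ * x₄) ^ 2 + θ.im ^ 2 * (x₄ - x₂) ^ 2)) := by
  rw [← pair_id, ← pair_id]
  have hp := Real.pi_pos
  have (a : ℝ) : (a - θ.re) ^ 2 + θ.im ^ 2 ≠ 0 := by positivity
  have h1 := this x₁
  have h2 := this x₂
  have h3 := this x₃
  have h4 := this x₄
  simp only [cauchyL, Fin.prod_univ_four, Matrix.cons_val]
  field_simp

theorem stmt_11 (x₁ x₂ x₃ x₄ : ℝ) (h12 : x₁ < x₂) (h23 : x₂ < x₃) (h34 : x₃ < x₄)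
    (θhat : ℂ)
    (hθhat : θhat =
      (((x₂ * x₄ - x₁ * x₃) / (x₄ - x₃ + x₂ - x₁) : ℝ) : ℂ) +
        Complex.I *
          ((Real.sqrt ((x₄ - x₃) * (x₃ - x₂) * (x₄ - x₁) * (x₂ - x₁)) /
            (x₄ - x₃ + x₂ - x₁) : ℝ) : ℂ)) :
    0 < θhat.im ∧
      ∀ θ : ℂ, 0 < θ.im →
        cauchyL ![x₁, x₂, x₃, x₄] θ ≤ cauchyL ![x₁, x₂, x₃, x₄] θhat := by
  
  have hD : 0 < x₄ - x₃ + x₂ - x₁ := by linarith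
  have hR : 0 < (x₄ - x₃) * (x₃ - x₂) * (x₄ - x₁) * (x₂ - x₁) := by
    have a1 : 0 < x₄ - x₃ := by linarith
    have a2 : 0 < x₃ - x₂ := by linarith
    have a3 : 0 < x₄ - x₁ := by linarith
    have a4 : 0 < x₂ - x₁ := by linarith
    positivity
  have hre : θhat.re = (x₂ * x₄ - x₁ * x₃) / (x₄ - x₃ + x₂ - x₁) := by
    rw [hθhat, Complex.add_re, Complex.re_mul_ofReal, Complex.ofReal_re]; simp
  have him : θhat.im = Real.sqrt ((x₄ - x₃) * (x₃ - x₂) * (x₄ - x₁) * (x₂ - x₁)) /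
      (x₄ - x₃ + x₂ - x₁) := by
    rw [hθhat, Complex.add_im, Complex.im_mul_ofReal, Complex.ofReal_im]; simp
  have hpos : 0 < θhat.im := by
    rw [him]; exact div_pos (Real.sqrt_pos.mpr hR) hD
  refine ⟨hpos, fun θ hθ => ?_⟩
  have him2 : θhat.im ^ 2 = ((x₄ - x₃) * (x₃ - x₂) * (x₄ - x₁) * (x₂ - x₁)) /
      (x₄ - x₃ + x₂ - x₁) ^ 2 := by
    rw [him, div_pow, Real.sq_sqrt hR.le]
  have e1 : θhat.re ^ 2 + θhat.im ^ 2 - (x₁ + x₃) * θhat.re + x₁ * x₃ = 0 := by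
    rw [him2, hre]; field_simp; ring
  have e2 : θhat.re ^ 2 + θhat.im ^ 2 - (x₂ + x₄) * θhat.re + x₂ * x₄ = 0 := by
    rw [him2, hre]; field_simp; ring
  have b1 : 0 < x₃ - x₁ := by linarith
  have b2 : 0 < x₄ - x₂ := by linarith
  have hp := Real.pi_pos
  have key : cauchyL ![x₁, x₂, x₃, x₄] θhat =
      (θ.im ^ 4 / Real.pi ^ 4) / ((θ.im ^ 2 * (x₃ - x₁) ^ 2) * (θ.im ^ 2 * (x₄ - x₂) ^ 2)) := by
    rw [L_eq _ _ _ _ _ hpos, e1, e2]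
    have := hpos.ne'
    have := hθ.ne'
    field_simp
    ring
  rw [key, L_eq _ _ _ _ _ hθ]
  gcongr
  · exact le_add_of_nonneg_left (sq_nonneg _)
  · exact le_add_of_nonneg_left (sq_nonneg _)
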